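/- arXiv:1609.00867 — 5 statements merged into one kernel-verified Lean document; each statement's English description precedes it below -/
import Mathlib

section
/- Let S be a set of n points in the plane in general position. Then A(S) = 4·□(S) + 3·△(S) and B(S) = 8·□(S) + 9·△(S), where □(S) is the number of 4-element subsets of S in convex position and △(S) is the number of 4-element subsets of S not in convex position. -/
open Finset

/-- The plane. -/
abbrev Plane : Type := ℝ × ℝ

/-- The determinant det(q - p, r - p). -/
def det2 (p q r : Plane) : ℝ :=
  (q.1 - p.1) * (r.2 - p.2) - (q.2 - p.2) * (r.1 - p.1)

/-- `r` is strictly to the left of the directed line from `p` to `q`. -/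
def LeftOf (p q r : Plane) : Prop := 0 < det2 p q r

/-- `r` is strictly to the right of the directed line from `p` to `q`. -/
def RightOf (p q r : Plane) : Prop := det2 p q r < 0

/-- A finite point set is in general position if no three of its points are collinear. -/
def GenPos (S : Finset Plane) : Prop :=
  ∀ p ∈ S, ∀ q ∈ S, ∀ r ∈ S, p ≠ q → p ≠ r → q ≠ r →
    ¬ Collinear ℝ ({p, q, r} : Set Plane)

open Classical in
/-- `lam S p q` is the number of points of `S` strictly to the left of the directed
line from `p` to `q`, with `lam S p p = 0`. -/
noncomputable def lam (S : Finset Plane) (p q : Plane) : ℕ :=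
  if p = q then 0 else (S.filter fun r => LeftOf p q r).card

/-- A finite point set is in convex position if no one of its points lies in the
convex hull of the others. -/
def ConvexPos (P : Finset Plane) : Prop :=
  ∀ x ∈ P, x ∉ convexHull ℝ ((P.erase x : Finset Plane) : Set Plane)

open Classical in
/-- The number of type-A patterns of `S`: tuples `((p,q),{r,s})` of four distinct
points of `S` with both `r` and `s` strictly to the left of the directed line from
`p` to `q`. -/
noncomputable def patACount (S : Finset Plane) : ℕ :=
  ∑ p ∈ S, ∑ q ∈ S.erase p,
    (((S \ {p, q}).powersetCard 2).filter fun e => ∀ r ∈ e, LeftOf p q r).card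

open Classical in
/-- The number of type-B patterns of `S`: tuples `((p,q),{r,s})` of four distinct
points of `S` such that not both `r` and `s` are strictly to the left of the
directed line from `p` to `q`. -/
noncomputable def patBCount (S : Finset Plane) : ℕ :=
  ∑ p ∈ S, ∑ q ∈ S.erase p,
    (((S \ {p, q}).powersetCard 2).filter fun e => ¬ ∀ r ∈ e, LeftOf p q r).card

open Classical in
/-- The number of 4-element subsets of `S` in convex position. -/
noncomputable def squareCount (S : Finset Plane) : ℕ :=
  ((S.powersetCard 4).filter fun P => ConvexPos P).card

open Classical in
/-- The number of 4-element subsets of `S` not in convex position. -/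
noncomputable def triCount (S : Finset Plane) : ℕ :=
  ((S.powersetCard 4).filter fun P => ¬ ConvexPos P).card

open Classical in
/-- All patterns satisfying `R`, as a finset of triples. -/
noncomputable def patSet (R : Plane → Plane → Finset Plane → Prop) (S : Finset Plane) :
    Finset (Plane × Plane × Finset Plane) :=
  (S ×ˢ S ×ˢ S.powersetCard 2).filter
    fun t => t.1 ≠ t.2.1 ∧ t.1 ∉ t.2.2 ∧ t.2.1 ∉ t.2.2 ∧ R t.1 t.2.1 t.2.2

open Classical in
lemma card_patSet (R : Plane → Plane → Finset Plane → Prop) (S : Finset Plane) :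
    ∑ p ∈ S, ∑ q ∈ S.erase p, (((S \ {p, q}).powersetCard 2).filter fun e => R p q e).card
      = (patSet R S).card := by
  unfold patSet
  rw [Finset.card_filter, Finset.sum_product]
  refine Finset.sum_congr rfl fun p hp => ?_
  rw [Finset.sum_product, ← Finset.add_sum_erase S _ hp]
  have h0 : ∑ x ∈ S.powersetCard 2, (if p ≠ p ∧ p ∉ x ∧ p ∉ x ∧ R p p x then 1 else 0) = 0 := by
    simp
  simp only
  rw [h0, zero_add]
  refine Finset.sum_congr rfl fun q hq => ?_
  rw [← Finset.card_filter]
  congr 1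
  ext e
  have hq' := (Finset.mem_erase.1 hq).1
  simp only [Finset.mem_filter, Finset.mem_powersetCard, Finset.subset_sdiff,
    Finset.disjoint_insert_right, Finset.disjoint_singleton_right]
  have := hq'.symm
  tauto

open Classical in
lemma patSet_double (R : Plane → Plane → Finset Plane → Prop) (S : Finset Plane) :
    (patSet R S).card = ∑ P ∈ S.powersetCard 4, (patSet R P).card := by
  have key : ∀ t ∈ patSet R S, insert t.1 (insert t.2.1 t.2.2) ∈ S.powersetCard 4 := by
    rintro ⟨p, q, e⟩ h
    simp only [patSet, Finset.mem_filter, Finset.mem_product, Finset.mem_powersetCard] at h ⊢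
    obtain ⟨⟨hp, hq, he, hc⟩, hpq, hpe, hqe, -⟩ := h
    refine ⟨Finset.insert_subset hp (Finset.insert_subset hq he), ?_⟩
    rw [Finset.card_insert_of_notMem (by simp [hpq, hpe]), Finset.card_insert_of_notMem hqe, hc]
  rw [Finset.card_eq_sum_card_fiberwise (f := fun t => insert t.1 (insert t.2.1 t.2.2))
    (fun t ht => key t (Finset.mem_coe.1 ht))]
  refine Finset.sum_congr rfl fun P hP => ?_
  congr 1
  ext ⟨p, q, e⟩
  rw [Finset.mem_powersetCard] at hP
  simp only [patSet, Finset.mem_filter, Finset.mem_product, Finset.mem_powersetCard]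
  constructor
  · rintro ⟨⟨⟨hp, hq, he, hc⟩, h⟩, rfl⟩
    refine ⟨⟨by simp, by simp, ?_, hc⟩, h⟩
    exact (Finset.subset_insert _ _).trans (Finset.subset_insert _ _)
  · rintro ⟨⟨hp, hq, he, hc⟩, h⟩
    refine ⟨⟨⟨hP.1 hp, hP.1 hq, he.trans hP.1, hc⟩, h⟩, ?_⟩
    obtain ⟨hpq, hpe, hqe, -⟩ := h
    refine Finset.eq_of_subset_of_card_le
      (Finset.insert_subset hp (Finset.insert_subset hq he)) ?_
    rw [Finset.card_insert_of_notMem (by simp [hpq, hpe]), Finset.card_insert_of_notMem hqe, hc,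
      hP.2]

lemma patA_double (S : Finset Plane) :
    patACount S = ∑ P ∈ S.powersetCard 4, patACount P := by
  have key : ∀ T : Finset Plane,
      patACount T = (patSet (fun p q e => ∀ r ∈ e, LeftOf p q r) T).card := by
    intro T
    rw [← card_patSet]
    unfold patACount
    refine Finset.sum_congr rfl fun p _ => Finset.sum_congr rfl fun q _ => ?_
    congr!
  simp only [key]
  exact patSet_double _ S

lemma patB_double (S : Finset Plane) :
    patBCount S = ∑ P ∈ S.powersetCard 4, patBCount P := by
  have key : ∀ T : Finset Plane,
      patBCount T = (patSet (fun p q e => ¬ ∀ r ∈ e, LeftOf p q r) T).card := by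
    intro T
    rw [← card_patSet]
    unfold patBCount
    refine Finset.sum_congr rfl fun p _ => Finset.sum_congr rfl fun q _ => ?_
    congr!
  simp only [key]
  exact patSet_double _ S

lemma card_sdiff_pair {P : Finset Plane} (hP : P.card = 4) {p q : Plane} (hp : p ∈ P)
    (hq : q ∈ P.erase p) : (P \ {p, q}).card = 2 := by
  have h := Finset.mem_erase.1 hq
  rw [Finset.card_sdiff_of_subset (by
    intro x hx; simp at hx; rcases hx with rfl | rfl; exacts [hp, h.2]),
    Finset.card_pair h.1.symm, hP]

lemma patAB_four {P : Finset Plane} (hP : P.card = 4) : patACount P + patBCount P = 12 := by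
  unfold patACount patBCount
  rw [← Finset.sum_add_distrib]
  have : ∀ p ∈ P, (∑ q ∈ P.erase p, 1) = 3 := by
    intro p hp; simp [Finset.card_erase_of_mem hp, hP]
  trans ∑ p ∈ P, ∑ q ∈ P.erase p, 1
  · refine Finset.sum_congr rfl fun p hp => ?_
    rw [← Finset.sum_add_distrib]
    refine Finset.sum_congr rfl fun q hq => ?_
    rw [Finset.card_filter_add_card_filter_not, Finset.card_powersetCard,
      card_sdiff_pair hP hp hq]
    rfl
  · rw [Finset.sum_congr rfl this]; simp [hP]

open Classical in
lemma patA_four {P : Finset Plane} (hP : P.card = 4) : patACount P =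
    ∑ p ∈ P, ∑ q ∈ P.erase p, if (∀ r ∈ P \ {p, q}, LeftOf p q r) then 1 else 0 := by
  unfold patACount
  refine Finset.sum_congr rfl fun p hp => Finset.sum_congr rfl fun q hq => ?_
  have : (P \ {p, q}).powersetCard 2 = {P \ {p, q}} := by
    conv_lhs => rw [← card_sdiff_pair hP hp hq]
    exact Finset.powersetCard_self _
  rw [this, Finset.filter_singleton]
  split_ifs <;> simp

lemma hull_of_pos {a b c d : Plane} (h1 : 0 < det2 a b c * det2 b c d)
    (h2 : 0 < det2 a b c * det2 c a d) (h3 : 0 < det2 a b c * det2 a b d) :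
    d ∈ convexHull ℝ ({a, b, c} : Set Plane) := by
  have h0 : det2 a b c ≠ 0 := by intro h; simp [h] at h1
  have hc := convex_convexHull ℝ ({a, b, c} : Set Plane)
  have ha : a ∈ convexHull ℝ ({a, b, c} : Set Plane) := subset_convexHull _ _ (by simp)
  have hb : b ∈ convexHull ℝ ({a, b, c} : Set Plane) := subset_convexHull _ _ (by simp)
  have hc' : c ∈ convexHull ℝ ({a, b, c} : Set Plane) := subset_convexHull _ _ (by simp)
  have hs : 0 < det2 a b c ^ 2 := by positivity
  have key := hc.sum_mem (t := Finset.univ)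
    (w := ![det2 a b c * det2 b c d / det2 a b c ^ 2, det2 a b c * det2 c a d / det2 a b c ^ 2,
      det2 a b c * det2 a b d / det2 a b c ^ 2]) (z := ![a, b, c])
    (by intro i _; fin_cases i <;> simp <;> positivity)
    (by
      simp [Fin.sum_univ_three]
      field_simp
      simp only [det2]; ring)
    (by intro i _; fin_cases i <;> simp [ha, hb, hc'])
  convert key
  simp [Fin.sum_univ_three]
  ext
  · simp
    field_simp
    simp only [det2]; ring
  · simp
    field_simp
    simp only [det2]; ring

lemma hull_edge {a b c d : Plane} (hd : d ∈ convexHull ℝ ({a, b, c} : Set Plane)) :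
    0 ≤ det2 a b c * det2 a b d := by
  have hconv : Convex ℝ {x : Plane | 0 ≤ det2 a b c * det2 a b x} := by
    intro x hx y hy s t hs ht hst
    simp only [Set.mem_ofPred_eq] at *
    have : det2 a b c * det2 a b (s • x + t • y) =
        s * (det2 a b c * det2 a b x) + t * (det2 a b c * det2 a b y) := by
      obtain rfl : t = 1 - s := by linarith
      simp [det2]; ring
    rw [this]; positivity
  refine convexHull_min ?_ hconv hd
  intro x hx
  simp only [Set.mem_insert_iff, Set.mem_singleton_iff] at hx
  rcases hx with rfl | rfl | rfl
  · simp [det2]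
  · simp [det2, mul_comm]
  · exact mul_self_nonneg (det2 a b x)

lemma det2_rot (a b c : Plane) : det2 b c a = det2 a b c := by simp only [det2]; ring
lemma det2_swap (a b c : Plane) : det2 b a c = - det2 a b c := by simp only [det2]; ring

lemma hull_iff {a b c d : Plane} (h1 : det2 b c d ≠ 0) (h2 : det2 c a d ≠ 0)
    (h3 : det2 a b d ≠ 0) (h0 : det2 a b c ≠ 0) :
    d ∈ convexHull ℝ ({a, b, c} : Set Plane) ↔
    0 < det2 a b c * det2 b c d ∧ 0 < det2 a b c * det2 c a d ∧ 0 < det2 a b c * det2 a b d := by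
  constructor
  · intro h
    refine ⟨lt_of_le_of_ne ?_ (mul_ne_zero h0 h1).symm, lt_of_le_of_ne ?_ (mul_ne_zero h0 h2).symm,
      lt_of_le_of_ne (hull_edge h) (mul_ne_zero h0 h3).symm⟩
    · rw [← det2_rot a b c]
      apply hull_edge
      convert h using 2
      ext; simp; tauto
    · rw [← det2_rot a b c, ← det2_rot b c a]
      apply hull_edge
      convert h using 2
      ext; simp; tauto
  · rintro ⟨h1, h2, h3⟩; exact hull_of_pos h1 h2 h3

lemma det2_ne_zero {a b c : Plane} (hab : a ≠ b) (h : ¬ Collinear ℝ ({a, b, c} : Set Plane)) :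
    det2 a b c ≠ 0 := by
  intro h0
  apply h
  rw [collinear_iff_of_mem (p₀ := a) (by simp)]
  refine ⟨b - a, ?_⟩
  intro p hp
  simp only [Set.mem_insert_iff, Set.mem_singleton_iff] at hp
  rcases hp with rfl | rfl | rfl
  · exact ⟨0, by simp⟩
  · exact ⟨1, by simp⟩
  · by_cases hx : b.1 - a.1 = 0
    · have hy : b.2 - a.2 ≠ 0 := by
        intro hy; exact hab (Prod.ext (by linarith) (by linarith))
      refine ⟨(p.2 - a.2) / (b.2 - a.2), ?_⟩
      simp only [det2] at h0
      ext
      · simp; field_simp; linarith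
      · simp; field_simp; ring
    · refine ⟨(p.1 - a.1) / (b.1 - a.1), ?_⟩
      simp only [det2] at h0
      ext
      · simp; field_simp; ring
      · simp; field_simp; linarith

set_option maxHeartbeats 2000000 in
open Classical in
lemma four_points {a b c d : Plane} (hab : a ≠ b) (hac : a ≠ c) (had : a ≠ d) (hbc : b ≠ c)
    (hbd : b ≠ d) (hcd : c ≠ d) (h1 : det2 b c d ≠ 0) (h2 : det2 a c d ≠ 0)
    (h3 : det2 a b d ≠ 0) (h4 : det2 a b c ≠ 0) :
    patACount {a, b, c, d} = if ConvexPos {a, b, c, d} then 4 else 3 := by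
  have hrel : det2 b c d - det2 a c d + det2 a b d - det2 a b c = 0 := by simp only [det2]; ring
  have e1 : ({a, b, c, d} : Finset Plane).erase a = {b, c, d} := by ext; simp; grind
  have e2 : ({a, b, c, d} : Finset Plane).erase b = {a, c, d} := by ext; simp; grind
  have e3 : ({a, b, c, d} : Finset Plane).erase c = {a, b, d} := by ext; simp; grind
  have e4 : ({a, b, c, d} : Finset Plane).erase d = {a, b, c} := by ext; simp; grind
  have sd : ∀ p q r s : Plane, ({a, b, c, d} : Finset Plane) = {p, q, r, s} →
      r ≠ p → r ≠ q → s ≠ p → s ≠ q →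
      ((∀ x ∈ ({a, b, c, d} : Finset Plane) \ {p, q}, LeftOf p q x) ↔
        (0 < det2 p q r ∧ 0 < det2 p q s)) := by
    intro p q r s h h1 h2 h3 h4
    rw [h]
    simp only [LeftOf, Finset.mem_sdiff, Finset.mem_insert, Finset.mem_singleton]
    grind
  have hcp : ConvexPos {a, b, c, d} ↔
      a ∉ convexHull ℝ ({b, c, d} : Set Plane) ∧ b ∉ convexHull ℝ ({a, c, d} : Set Plane) ∧
      c ∉ convexHull ℝ ({a, b, d} : Set Plane) ∧ d ∉ convexHull ℝ ({a, b, c} : Set Plane) := by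
    unfold ConvexPos
    simp only [Finset.mem_insert, Finset.mem_singleton, forall_eq_or_imp, forall_eq, e1, e2, e3, e4,
      Finset.coe_insert, Finset.coe_singleton]
  have q1 : det2 b c a = det2 a b c := by simp only [det2]; ring
  have q2 : det2 c a b = det2 a b c := by simp only [det2]; ring
  have q3 : det2 b a c = -det2 a b c := by simp only [det2]; ring
  have q4 : det2 a c b = -det2 a b c := by simp only [det2]; ring
  have q5 : det2 c b a = -det2 a b c := by simp only [det2]; ring
  have r1 : det2 b d a = det2 a b d := by simp only [det2]; ring
  have r2 : det2 d a b = det2 a b d := by simp only [det2]; ring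
  have r3 : det2 b a d = -det2 a b d := by simp only [det2]; ring
  have r4 : det2 a d b = -det2 a b d := by simp only [det2]; ring
  have r5 : det2 d b a = -det2 a b d := by simp only [det2]; ring
  have s1 : det2 c d a = det2 a c d := by simp only [det2]; ring
  have s2 : det2 d a c = det2 a c d := by simp only [det2]; ring
  have s3 : det2 c a d = -det2 a c d := by simp only [det2]; ring
  have s4 : det2 a d c = -det2 a c d := by simp only [det2]; ring
  have s5 : det2 d c a = -det2 a c d := by simp only [det2]; ring
  have t1 : det2 c d b = det2 b c d := by simp only [det2]; ring
  have t2 : det2 d b c = det2 b c d := by simp only [det2]; ring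
  have t3 : det2 c b d = -det2 b c d := by simp only [det2]; ring
  have t4 : det2 b d c = -det2 b c d := by simp only [det2]; ring
  have t5 : det2 d c b = -det2 b c d := by simp only [det2]; ring
  rw [hull_iff (by simp [*]) (by simp [*]) (by simp [*]) (by simp [*]),
    hull_iff (by simp [*]) (by simp [*]) (by simp [*]) (by simp [*]),
    hull_iff (by simp [*]) (by simp [*]) (by simp [*]) (by simp [*]),
    hull_iff (by simp [*]) (by simp [*]) (by simp [*]) (by simp [*])] at hcp
  have hcard : ({a, b, c, d} : Finset Plane).card = 4 := by
    rw [Finset.card_insert_of_notMem (by simp [*]), Finset.card_insert_of_notMem (by simp [*]),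
      Finset.card_pair hcd]
  rw [patA_four hcard]
  have f1 : ∀ f : Plane → ℕ, ∑ x ∈ ({a, b, c, d} : Finset Plane), f x = f a + f b + f c + f d := by
    intro f
    rw [Finset.sum_insert (by simp [*]), Finset.sum_insert (by simp [*]),
      Finset.sum_insert (by simp [*]), Finset.sum_singleton]; ring
  have f2 : ∀ (x y z : Plane) (f : Plane → ℕ), x ≠ y → x ≠ z → y ≠ z →
      ∑ x ∈ ({x, y, z} : Finset Plane), f x = f x + f y + f z := by
    intro x y z f h1 h2 h3
    rw [Finset.sum_insert (by simp [*]), Finset.sum_insert (by simp [*]),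
      Finset.sum_singleton]; ring
  rw [f1, e1, e2, e3, e4, f2 _ _ _ _ hbc hbd hcd, f2 _ _ _ _ hac had hcd, f2 _ _ _ _ hab had hbd,
    f2 _ _ _ _ hab hac hbc]
  rw [if_congr (sd a b c d (by ext; simp) (by first | assumption | (symm; assumption)) (by first | assumption | (symm; assumption)) (by first | assumption | (symm; assumption)) (by first | assumption | (symm; assumption))) rfl rfl,
    if_congr (sd a c b d (by clear * -; ext; simp; tauto) (by first | assumption | (symm; assumption)) (by first | assumption | (symm; assumption)) (by first | assumption | (symm; assumption)) (by first | assumption | (symm; assumption))) rfl rfl,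
    if_congr (sd a d b c (by clear * -; ext; simp; tauto) (by first | assumption | (symm; assumption)) (by first | assumption | (symm; assumption)) (by first | assumption | (symm; assumption)) (by first | assumption | (symm; assumption))) rfl rfl,
    if_congr (sd b a c d (by clear * -; ext; simp; tauto) (by first | assumption | (symm; assumption)) (by first | assumption | (symm; assumption)) (by first | assumption | (symm; assumption)) (by first | assumption | (symm; assumption))) rfl rfl,
    if_congr (sd b c a d (by clear * -; ext; simp; tauto) (by first | assumption | (symm; assumption)) (by first | assumption | (symm; assumption)) (by first | assumption | (symm; assumption)) (by first | assumption | (symm; assumption))) rfl rfl,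
    if_congr (sd b d a c (by clear * -; ext; simp; tauto) (by first | assumption | (symm; assumption)) (by first | assumption | (symm; assumption)) (by first | assumption | (symm; assumption)) (by first | assumption | (symm; assumption))) rfl rfl,
    if_congr (sd c a b d (by clear * -; ext; simp; tauto) (by first | assumption | (symm; assumption)) (by first | assumption | (symm; assumption)) (by first | assumption | (symm; assumption)) (by first | assumption | (symm; assumption))) rfl rfl,
    if_congr (sd c b a d (by clear * -; ext; simp; tauto) (by first | assumption | (symm; assumption)) (by first | assumption | (symm; assumption)) (by first | assumption | (symm; assumption)) (by first | assumption | (symm; assumption))) rfl rfl,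
    if_congr (sd c d a b (by clear * -; ext; simp; tauto) (by first | assumption | (symm; assumption)) (by first | assumption | (symm; assumption)) (by first | assumption | (symm; assumption)) (by first | assumption | (symm; assumption))) rfl rfl,
    if_congr (sd d a b c (by clear * -; ext; simp; tauto) (by first | assumption | (symm; assumption)) (by first | assumption | (symm; assumption)) (by first | assumption | (symm; assumption)) (by first | assumption | (symm; assumption))) rfl rfl,
    if_congr (sd d b a c (by clear * -; ext; simp; tauto) (by first | assumption | (symm; assumption)) (by first | assumption | (symm; assumption)) (by first | assumption | (symm; assumption)) (by first | assumption | (symm; assumption))) rfl rfl,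
    if_congr (sd d c a b (by clear * -; ext; simp; tauto) (by first | assumption | (symm; assumption)) (by first | assumption | (symm; assumption)) (by first | assumption | (symm; assumption)) (by first | assumption | (symm; assumption))) rfl rfl,
    if_congr hcp rfl rfl]
  simp only [q1, q2, q3, q4, q5, r1, r2, r3, r4, r5, s1, s2, s3, s4, s5, t1, t2, t3, t4, t5]
  clear q1 q2 q3 q4 q5 r1 r2 r3 r4 r5 s1 s2 s3 s4 s5 t1 t2 t3 t4 t5 hcp sd e1 e2 e3 e4 f1 f2 hcard
  generalize det2 a b c = w at *
  generalize det2 a b d = x at *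
  generalize det2 a c d = y at *
  generalize det2 b c d = z at *
  rcases lt_or_gt_of_ne h1 with k1 | k1 <;> rcases lt_or_gt_of_ne h2 with k2 | k2 <;>
  rcases lt_or_gt_of_ne h3 with k3 | k3 <;> rcases lt_or_gt_of_ne h4 with k4 | k4 <;>
  first
  | (exfalso; linarith)
  | simp [mul_pos_iff, mul_neg_iff, mul_nonneg_iff, mul_nonpos_iff, k1, k2, k3, k4, k1.le, k2.le, k3.le, k4.le, k1.not_gt, k2.not_gt,
      k3.not_gt, k4.not_gt]

open Classical in
lemma four_set {P : Finset Plane} (hP : P.card = 4) (hgp : GenPos P) :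
    patACount P = if ConvexPos P then 4 else 3 := by
  obtain ⟨a, T, haT, rfl, hT⟩ := Finset.card_eq_succ.1 hP
  obtain ⟨b, c, d, hbc, hbd, hcd, rfl⟩ := Finset.card_eq_three.1 hT
  simp only [Finset.mem_insert, Finset.mem_singleton, not_or] at haT
  obtain ⟨hab, hac, had⟩ := haT
  refine four_points hab hac had hbc hbd hcd ?_ ?_ ?_ ?_
  · exact det2_ne_zero hbc (hgp _ (by simp) _ (by simp) _ (by simp) hbc hbd hcd)
  · exact det2_ne_zero hac (hgp _ (by simp) _ (by simp) _ (by simp) hac had hcd)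
  · exact det2_ne_zero hab (hgp _ (by simp) _ (by simp) _ (by simp) hab had hbd)
  · exact det2_ne_zero hab (hgp _ (by simp) _ (by simp) _ (by simp) hab hac hbc)

theorem stmt4 (S : Finset Plane) (hgp : GenPos S) :
    patACount S = 4 * squareCount S + 3 * triCount S ∧
    patBCount S = 8 * squareCount S + 9 * triCount S := by
  classical
  have hA : ∀ P ∈ S.powersetCard 4, patACount P = if ConvexPos P then 4 else 3 := by
    intro P hP
    rw [Finset.mem_powersetCard] at hP
    exact four_set hP.2 fun p hp q hq r hr =>
      hgp p (hP.1 hp) q (hP.1 hq) r (hP.1 hr)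
  have hB : ∀ P ∈ S.powersetCard 4, patBCount P = if ConvexPos P then 8 else 9 := by
    intro P hP
    have h1 := hA P hP
    have h2 := patAB_four (Finset.mem_powersetCard.1 hP).2
    split_ifs at h1 ⊢ <;> omega
  rw [patA_double, patB_double, Finset.sum_congr rfl hA, Finset.sum_congr rfl hB]
  unfold squareCount triCount
  constructor
  · rw [Finset.sum_ite]; simp [mul_comm]
  · rw [Finset.sum_ite]; simp [mul_comm]
end

section
/- Let S be a set of n points in the plane in general position. Then cr(S) = f_S(S,S) − n(n−1)(n−2)(n−3)/8, where f_S(S,S) = Σ_{p∈S} Σ_{q∈S} C(λ_S(p,q), 2). -/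
open Finset

/-- `fS S P Q = ∑_{p ∈ P} ∑_{q ∈ Q} C(lam S p q, 2)`. -/
noncomputable def fS (S P Q : Finset Plane) : ℕ :=
  ∑ p ∈ P, ∑ q ∈ Q, Nat.choose (lam S p q) 2

lemma det2_ne (p q r : Plane) (hpq : p ≠ q) (h : ¬ Collinear ℝ ({p, q, r} : Set Plane)) :
    det2 p q r ≠ 0 := by
  intro h0
  apply h
  rw [collinear_iff_of_mem (p₀ := p) (by simp)]
  refine ⟨q - p, ?_⟩
  obtain ⟨p1, p2⟩ := p
  obtain ⟨q1, q2⟩ := q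
  obtain ⟨r1, r2⟩ := r
  simp only [det2] at h0
  intro x hx
  simp only [Set.mem_insert_iff, Set.mem_singleton_iff] at hx
  rcases hx with rfl | rfl | rfl
  · exact ⟨0, by simp⟩
  · exact ⟨1, by simp⟩
  · by_cases h1 : q1 - p1 = 0
    · have h2 : q2 - p2 ≠ 0 := by
        intro h2
        apply hpq
        ext <;> simp <;> linarith
      refine ⟨(r2 - p2) / (q2 - p2), ?_⟩
      ext
      · have : r1 - p1 = 0 := by
          rw [h1] at h0
          have : (q2 - p2) * (r1 - p1) = 0 := by linarith
          exact (mul_eq_zero.mp this).resolve_left h2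
        simp [h1]; linarith
      · simp; field_simp; ring
    · refine ⟨(r1 - p1) / (q1 - p1), ?_⟩
      ext
      · simp; field_simp; ring
      · simp; field_simp; linarith

lemma mem_tri (a b c x : Plane) (hD : det2 a b c ≠ 0) (h1 : det2 a b x ≠ 0)
    (h2 : det2 b c x ≠ 0) (h3 : det2 c a x ≠ 0) :
    x ∈ convexHull ℝ ({a, b, c} : Set Plane) ↔
      (0 < det2 a b x ∧ 0 < det2 b c x ∧ 0 < det2 c a x) ∨
      (det2 a b x < 0 ∧ det2 b c x < 0 ∧ det2 c a x < 0) := by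
  have hsum : det2 a b x + det2 b c x + det2 c a x = det2 a b c := by
    simp only [det2]; ring
  rw [convexHull_insert (by simp), convexHull_pair]
  simp only [segment_eq_image, mem_convexJoin, Set.mem_singleton_iff, exists_eq_left, Set.mem_image]
  constructor
  · rintro ⟨_, ⟨t, ⟨ht0, ht1⟩, rfl⟩, s, ⟨hs0, hs1⟩, rfl⟩
    have e1 : det2 a b ((1 - s) • a + s • ((1 - t) • b + t • c)) = s * t * det2 a b c := by
      simp [det2]; ring
    have e2 : det2 b c ((1 - s) • a + s • ((1 - t) • b + t • c)) = (1 - s) * det2 a b c := by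
      simp [det2]; ring
    have e3 : det2 c a ((1 - s) • a + s • ((1 - t) • b + t • c)) = s * (1 - t) * det2 a b c := by
      simp [det2]; ring
    rw [e1] at h1 ⊢
    rw [e2] at h2 ⊢
    rw [e3] at h3 ⊢
    have k1 : 0 < s * t := lt_of_le_of_ne (by positivity) (Ne.symm (left_ne_zero_of_mul h1))
    have k2 : 0 < 1 - s := lt_of_le_of_ne (by linarith) (Ne.symm (left_ne_zero_of_mul h2))
    have k3 : 0 < s * (1 - t) := lt_of_le_of_ne (mul_nonneg hs0 (by linarith))
      (Ne.symm (left_ne_zero_of_mul h3))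
    rcases lt_or_gt_of_ne hD with h | h
    · right
      exact ⟨mul_neg_of_pos_of_neg k1 h, mul_neg_of_pos_of_neg k2 h, mul_neg_of_pos_of_neg k3 h⟩
    · left
      exact ⟨mul_pos k1 h, mul_pos k2 h, mul_pos k3 h⟩
  · intro h
    have key : ∃ u v w : ℝ, 0 < u ∧ 0 < v ∧ 0 < w ∧ u + v + w = 1 ∧ u • a + v • b + w • c = x := by
      refine ⟨det2 b c x / det2 a b c, det2 c a x / det2 a b c, det2 a b x / det2 a b c,
        ?_, ?_, ?_, ?_, ?_⟩
      · rcases h with ⟨p1, p2, p3⟩ | ⟨p1, p2, p3⟩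
        · exact div_pos p2 (by linarith)
        · exact div_pos_of_neg_of_neg p2 (by linarith)
      · rcases h with ⟨p1, p2, p3⟩ | ⟨p1, p2, p3⟩
        · exact div_pos p3 (by linarith)
        · exact div_pos_of_neg_of_neg p3 (by linarith)
      · rcases h with ⟨p1, p2, p3⟩ | ⟨p1, p2, p3⟩
        · exact div_pos p1 (by linarith)
        · exact div_pos_of_neg_of_neg p1 (by linarith)
      · rw [← add_div, ← add_div, div_eq_one_iff_eq hD]; linarith
      · ext
        · simp
          field_simp
          simp only [det2]; ring
        · simp
          field_simp
          simp only [det2]; ring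
    obtain ⟨u, v, w, hu, hv, hw, huvw, hx⟩ := key
    have hvw : v + w ≠ 0 := by positivity
    refine ⟨_, ⟨w / (v + w), ⟨by positivity, ?_⟩, rfl⟩, v + w, ⟨by positivity, by linarith⟩, ?_⟩
    · rw [div_le_one (by positivity)]; linarith
    · rw [← hx]
      have hu' : u = 1 - (v + w) := by linarith
      subst hu'
      ext
      · simp; field_simp; ring
      · simp; field_simp; ring

open Classical in
/-- Pairs of a directed edge and a two-element set to its left. -/
noncomputable def TT (S : Finset Plane) : Finset ((Plane × Plane) × Finset Plane) :=
  ((S ×ˢ S) ×ˢ (S.powersetCard 2)).filter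
    fun t => t.1.1 ≠ t.1.2 ∧ ∀ r ∈ t.2, LeftOf t.1.1 t.1.2 r

lemma fS_eq (S : Finset Plane) : fS S S S = (TT S).card := by
  classical
  unfold fS TT
  rw [card_filter, sum_product, sum_product]
  refine sum_congr rfl fun p _ => sum_congr rfl fun q _ => ?_
  rw [← card_filter]
  unfold lam
  split_ifs with h
  · simp [h]
  · rw [← card_powersetCard]
    congr 1
    ext R
    simp only [mem_powersetCard, mem_filter, subset_iff, ne_eq, h, not_false_eq_true, true_and]
    grind

lemma det2_left (p q : Plane) : det2 p q p = 0 := by simp [det2]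
lemma det2_right (p q : Plane) : det2 p q q = 0 := by simp [det2]; ring

open Classical in
/-- The underlying vertex set. -/
noncomputable def vs (t : (Plane × Plane) × Finset Plane) : Finset Plane :=
  insert t.1.1 (insert t.1.2 t.2)

lemma vs_card (S : Finset Plane) (t) (ht : t ∈ TT S) : vs t ∈ S.powersetCard 4 := by
  classical
  obtain ⟨⟨p, q⟩, R⟩ := t
  simp only [TT, mem_filter, mem_product, mem_powersetCard] at ht
  obtain ⟨⟨⟨hp, hq⟩, hR, hc⟩, hne, hl⟩ := ht
  have hpR : p ∉ R := fun h => by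
    have := hl p h
    simp [LeftOf, det2_left] at this
  have hqR : q ∉ R := fun h => by
    have := hl q h
    simp [LeftOf, det2_right] at this
  rw [mem_powersetCard]
  constructor
  · simp only [vs, insert_subset_iff]
    exact ⟨hp, hq, hR⟩
  · simp only [vs]
    rw [card_insert_of_notMem, card_insert_of_notMem hqR, hc]
    simp [hne, hpR]

lemma fS_sum (S : Finset Plane) : fS S S S = ∑ P ∈ S.powersetCard 4, fS P P P := by
  classical
  rw [fS_eq, card_eq_sum_card_fiberwise (f := vs) (t := S.powersetCard 4)
    (fun t ht => vs_card S t ht)]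
  refine sum_congr rfl fun P hP => ?_
  rw [fS_eq]
  congr 1
  ext t
  rw [mem_filter]
  constructor
  · rintro ⟨ht, rfl⟩
    simp only [TT, mem_filter, mem_product, mem_powersetCard] at ht ⊢
    refine ⟨⟨⟨by simp [vs], by simp [vs]⟩, ?_, ht.1.2.2⟩, ht.2⟩
    intro x hx
    simp [vs, hx]
  · intro ht
    have h1 := vs_card P t ht
    rw [mem_powersetCard] at h1 hP
    refine ⟨?_, eq_of_subset_of_card_le h1.1 (by omega)⟩
    simp only [TT, mem_filter, mem_product, mem_powersetCard] at ht ⊢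
    exact ⟨⟨⟨hP.1 ht.1.1.1, hP.1 ht.1.1.2⟩, ht.1.2.1.trans hP.1, ht.1.2.2⟩, ht.2⟩

open Classical in
lemma four (P : Finset Plane) (hP : P.card = 4) (hgp : GenPos P) :
    fS P P P = 3 + if ConvexPos P then 1 else 0 := by
  obtain ⟨a, b, c, d, hab, hac, had, hbc, hbd, hcd, rfl⟩ := card_eq_four.mp hP
  have n1 : det2 a b c ≠ 0 := det2_ne _ _ _ hab
    (hgp a (by simp) b (by simp) c (by simp) hab hac hbc)
  have n2 : det2 a b d ≠ 0 := det2_ne _ _ _ hab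
    (hgp a (by simp) b (by simp) d (by simp) hab had hbd)
  have n3 : det2 a c d ≠ 0 := det2_ne _ _ _ hac
    (hgp a (by simp) c (by simp) d (by simp) hac had hcd)
  have n4 : det2 b c d ≠ 0 := det2_ne _ _ _ hbc
    (hgp b (by simp) c (by simp) d (by simp) hbc hbd hcd)
  have hrel : det2 a b c - det2 a b d + det2 a c d - det2 b c d = 0 := by
    simp only [det2]; ring
  have rot : ∀ x y z : Plane, det2 y z x = det2 x y z := by
    intro x y z; simp only [det2]; ring
  have rot' : ∀ x y z : Plane, det2 z x y = det2 x y z := by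
    intro x y z; simp only [det2]; ring
  have s1 : ∀ x y z : Plane, det2 x z y = - det2 x y z := by
    intro x y z; simp only [det2]; ring
  have s2 : ∀ x y z : Plane, det2 y x z = - det2 x y z := by
    intro x y z; simp only [det2]; ring
  have s3 : ∀ x y z : Plane, det2 z y x = - det2 x y z := by
    intro x y z; simp only [det2]; ring
  have ed : ((({a, b, c, d} : Finset Plane).erase d : Finset Plane) : Set Plane) = {a, b, c} := by
    ext x; simp; grind
  have ec : ((({a, b, c, d} : Finset Plane).erase c : Finset Plane) : Set Plane) = {a, b, d} := by
    ext x; simp; grind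
  have eb : ((({a, b, c, d} : Finset Plane).erase b : Finset Plane) : Set Plane) = {a, c, d} := by
    ext x; simp; grind
  have ea : ((({a, b, c, d} : Finset Plane).erase a : Finset Plane) : Set Plane) = {b, c, d} := by
    ext x; simp; grind
  have md := mem_tri a b c d n1 n2 n4 (by rw [s2 a c d]; exact neg_ne_zero.mpr n3)
  have mc := mem_tri a b d c n2 n1 (by rw [s1 b c d]; exact neg_ne_zero.mpr n4)
    (by rw [rot' a c d]; exact n3)
  have mb := mem_tri a c d b n3 (by rw [s1 a b c]; exact neg_ne_zero.mpr n1)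
    (by rw [rot b c d]; exact n4) (by rw [rot' a b d]; exact n2)
  have ma := mem_tri b c d a n4 (by rw [rot a b c]; exact n1)
    (by rw [rot a c d]; exact n3) (by rw [s3 a b d]; exact neg_ne_zero.mpr n2)
  rw [s2 a c d] at md
  rw [s1 b c d, rot' a c d] at mc
  rw [s1 a b c, rot b c d, rot' a b d] at mb
  rw [rot a b c, rot a c d, s3 a b d] at ma
  have hconv : ConvexPos {a, b, c, d} ↔
      (a ∉ convexHull ℝ ({b, c, d} : Set Plane) ∧ b ∉ convexHull ℝ ({a, c, d} : Set Plane) ∧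
      c ∉ convexHull ℝ ({a, b, d} : Set Plane) ∧ d ∉ convexHull ℝ ({a, b, c} : Set Plane)) := by
    unfold ConvexPos
    simp only [mem_insert, mem_singleton, forall_eq_or_imp, forall_eq, ea, eb, ec, ed]
  rw [ma, mb, mc, md] at hconv
  have hlam : ∀ p q : Plane, lam {a, b, c, d} p q = if p = q then 0 else
      (if 0 < det2 p q a then 1 else 0) + ((if 0 < det2 p q b then 1 else 0) +
      ((if 0 < det2 p q c then 1 else 0) + (if 0 < det2 p q d then 1 else 0))) := by
    intro p q
    unfold lam LeftOf
    rw [card_filter, sum_insert (by simp [hab, hac, had]), sum_insert (by simp [hbc, hbd]),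
      sum_insert (by simp [hcd]), sum_singleton]
  have hf : ∀ g : Plane → ℕ, ∑ p ∈ ({a, b, c, d} : Finset Plane), g p
      = g a + (g b + (g c + g d)) := by
    intro g
    rw [sum_insert (by simp [hab, hac, had]), sum_insert (by simp [hbc, hbd]),
      sum_insert (by simp [hcd]), sum_singleton]
  unfold fS
  simp only [hf, hlam, det2_left, det2_right, hab, hac, had, hbc, hbd, hcd, hab.symm, hac.symm,
    had.symm, hbc.symm, hbd.symm, hcd.symm, if_true, if_false, lt_irrefl,
    s1 a b c, rot a b c, rot' a b c, s2 a b c, s3 a b c,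
    s1 a b d, rot a b d, rot' a b d, s2 a b d, s3 a b d,
    s1 a c d, rot a c d, rot' a c d, s2 a c d, s3 a c d,
    s1 b c d, rot b c d, rot' b c d, s2 b c d, s3 b c d, hconv, Left.neg_pos_iff, Left.neg_neg_iff]
  clear hconv ma mb mc md hf hlam s1 s2 s3 rot rot' ea eb ec ed hgp hP
  generalize det2 a b c = x at *
  generalize det2 a b d = y at *
  generalize det2 a c d = z at *
  generalize det2 b c d = w at *
  rcases lt_or_gt_of_ne n1 with h1 | h1 <;> rcases lt_or_gt_of_ne n2 with h2 | h2 <;>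
  rcases lt_or_gt_of_ne n3 with h3 | h3 <;> rcases lt_or_gt_of_ne n4 with h4 | h4 <;>
  first
  | (exfalso; linarith)
  | simp [h1, h2, h3, h4, h1.le, h2.le, h3.le, h4.le, not_lt_of_gt h1, not_lt_of_gt h2,
      not_lt_of_gt h3, not_lt_of_gt h4]

lemma choose4 (n : ℕ) : (n : ℤ) * ((n : ℤ) - 1) * ((n : ℤ) - 2) * ((n : ℤ) - 3) / 8
    = 3 * (n.choose 4 : ℤ) := by
  have h : (n : ℤ) * ((n : ℤ) - 1) * ((n : ℤ) - 2) * ((n : ℤ) - 3) = 24 * (n.choose 4 : ℤ) := by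
    rcases lt_or_ge n 4 with h | h
    · interval_cases n <;> simp [Nat.choose]
    · obtain ⟨m, rfl⟩ := Nat.exists_eq_add_of_le' h
      have := Nat.descFactorial_eq_factorial_mul_choose (m + 4) 4
      simp [Nat.descFactorial, Nat.factorial] at this
      zify at this
      push_cast
      linarith
  omega

theorem stmt7 (n : ℕ) (S : Finset Plane) (hcard : S.card = n) (hgp : GenPos S) :
    (squareCount S : ℤ) =
      (fS S S S : ℤ) - (n : ℤ) * ((n : ℤ) - 1) * ((n : ℤ) - 2) * ((n : ℤ) - 3) / 8 := by
  classical
  have h : fS S S S = 3 * n.choose 4 + squareCount S := by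
    rw [fS_sum]
    have : ∀ P ∈ S.powersetCard 4, fS P P P = 3 + if ConvexPos P then 1 else 0 := by
      intro P hP
      rw [mem_powersetCard] at hP
      rw [four P hP.2 fun p hp q hq r hr => hgp p (hP.1 hp) q (hP.1 hq) r (hP.1 hr)]
    rw [sum_congr rfl this, sum_add_distrib, ← card_filter, sum_const, card_powersetCard, hcard]
    simp only [squareCount, smul_eq_mul]
    rw [mul_comm]
  rw [choose4, h]
  push_cast
  ring
end

section
/- Let S be a finite set of points in the plane in general position, let p ∈ S, and let q ∈ S ∖ {p}. Then, as integers, Σ_{r∈S∖{p}} ( C(λ_{S∖{p}}(q,r), 2) − C(λ_S(q,r), 2) ) = Σ_{r ∈ S, r strictly to the left of the directed line from p to q} (1 − λ_S(q,r)). -/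
open Finset

theorem det2_cyc (p q r : Plane) : det2 q r p = det2 p q r := by
  unfold det2; ring

open Classical in
theorem stmt12 (S : Finset Plane) (hgp : GenPos S) (p : Plane) (hp : p ∈ S)
    (q : Plane) (hq : q ∈ S.erase p) :
    ∑ r ∈ S.erase p,
        ((Nat.choose (lam (S.erase p) q r) 2 : ℤ) - (Nat.choose (lam S q r) 2 : ℤ)) =
      ∑ r ∈ S.filter (fun r => LeftOf p q r), (1 - (lam S q r : ℤ)) := by
  have hsub : S.filter (fun r => LeftOf p q r) = (S.erase p).filter (fun r => LeftOf p q r) := by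
    ext r
    simp only [Finset.mem_filter, Finset.mem_erase]
    constructor
    · rintro ⟨h1, h2⟩
      refine ⟨⟨?_, h1⟩, h2⟩
      rintro rfl
      unfold LeftOf det2 at h2
      simp at h2
    · rintro ⟨⟨_, h1⟩, h2⟩
      exact ⟨h1, h2⟩
  rw [hsub, Finset.sum_filter]
  refine Finset.sum_congr rfl fun r hr => ?_
  by_cases hqr : q = r
  · subst hqr
    have : ¬ LeftOf p q q := by
      unfold LeftOf det2
      intro h
      linarith
    simp [this, lam]
  simp only [lam, if_neg hqr, Finset.filter_erase]
  by_cases h : LeftOf p q r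
  · have hm : p ∈ S.filter (fun x => LeftOf q r x) := by
      rw [Finset.mem_filter]
      refine ⟨hp, ?_⟩
      unfold LeftOf
      rw [det2_cyc]
      exact h
    rw [if_pos h, ← Finset.card_erase_add_one hm]
    rw [Nat.choose_succ_succ' _ 1, Nat.choose_one_right]
    push_cast
    ring
  · have hm : p ∉ S.filter (fun x => LeftOf q r x) := by
      rw [Finset.mem_filter]
      rintro ⟨_, h'⟩
      unfold LeftOf at h'
      rw [det2_cyc] at h'
      exact h h'
    rw [if_neg h, Finset.erase_eq_of_notMem hm]
    ring
end

section
/- Let S be a finite set of points in the plane and let p be a point not in S such that S ∪ {p} is in general position. Then f_{S∪{p}}(S, S) − f_S(S, S) = Σ_{q∈S} Σ_{r ∈ S, r strictly to the left of the directed line from p to q} λ_S(q,r). -/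
open Finset

open Classical in
theorem stmt13 (S : Finset Plane) (p : Plane) (hp : p ∉ S)
    (hgp : GenPos (insert p S)) :
    (fS (insert p S) S S : ℤ) - (fS S S S : ℤ) =
      ∑ q ∈ S, ∑ r ∈ S.filter (fun r => LeftOf p q r), (lam S q r : ℤ) := by
  have key : ∀ q ∈ S, ∀ r ∈ S,
      (Nat.choose (lam (insert p S) q r) 2 : ℤ) =
        (Nat.choose (lam S q r) 2 : ℤ) + if LeftOf p q r then (lam S q r : ℤ) else 0 := by
    intro q _ r _
    have hcyc : LeftOf q r p ↔ LeftOf p q r := by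
      have h : det2 q r p = det2 p q r := by unfold det2; ring
      unfold LeftOf
      rw [h]
    by_cases hqr : q = r
    · simp [lam, hqr]
    · by_cases hl : LeftOf p q r
      · have h1 : lam (insert p S) q r = lam S q r + 1 := by
          unfold lam
          rw [if_neg hqr, if_neg hqr, Finset.filter_insert, if_pos (hcyc.2 hl),
            Finset.card_insert_of_notMem]
          simp [hp]
        rw [h1, if_pos hl, Nat.choose_succ_succ' _ 1, Nat.choose_one_right]
        push_cast
        ring
      · have h1 : lam (insert p S) q r = lam S q r := by
          unfold lam
          rw [if_neg hqr, if_neg hqr, Finset.filter_insert, if_neg (fun h => hl (hcyc.1 h))]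
        rw [h1, if_neg hl, add_zero]
  unfold fS
  push_cast
  rw [← Finset.sum_sub_distrib]
  refine Finset.sum_congr rfl fun q hq => ?_
  rw [← Finset.sum_sub_distrib, Finset.sum_filter]
  refine Finset.sum_congr rfl fun r hr => ?_
  rw [key q hq r hr]
  ring
end

section
/- Let S be a set of n points in the plane in general position and let p ∈ S. Then, as integers, cr(S ∖ {p}) = cr(S) − f_S({p}, S) − f_S(S, {p}) + Σ_{q∈S∖{p}} Σ_{r ∈ S, r strictly to the left of the directed line from p to q} (1 − λ_S(q,r)) + (n−1)(n−2)(n−3)/2. -/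
open Finset

theorem det2_ne_s15 {S : Finset Plane} (h : GenPos S) {a b c : Plane} (ha : a ∈ S) (hb : b ∈ S)
    (hc : c ∈ S) (hab : a ≠ b) (hac : a ≠ c) (hbc : b ≠ c) : det2 a b c ≠ 0 := by
  intro h0
  apply h a ha b hb c hc hab hac hbc
  rw [collinear_iff_of_mem (p₀ := a) (by simp)]
  refine ⟨b - a, ?_⟩
  obtain ⟨a1, a2⟩ := a
  obtain ⟨b1, b2⟩ := b
  obtain ⟨c1, c2⟩ := c
  simp only [det2] at h0
  intro x hx
  simp only [Set.mem_insert_iff, Set.mem_singleton_iff] at hx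
  rcases hx with rfl | rfl | rfl
  · exact ⟨0, by simp⟩
  · exact ⟨1, by simp⟩
  · by_cases h1 : b1 - a1 = 0
    · have h2 : b2 - a2 ≠ 0 := by
        intro h2
        apply hab
        ext <;> simp <;> linarith
      refine ⟨(c2 - a2) / (b2 - a2), ?_⟩
      ext
      · simp [h1]
        rw [h1] at h0
        have : c1 - a1 = 0 := by
          have h3 : (b2 - a2) * (c1 - a1) = 0 := by linarith
          exact (mul_eq_zero.mp h3).resolve_left h2
        linarith
      · simp
        field_simp
        ring
    · refine ⟨(c1 - a1) / (b1 - a1), ?_⟩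
      ext
      · simp
        field_simp
        ring
      · simp
        field_simp
        linarith

theorem mem_hull3 (a b c x : Plane) : x ∈ convexHull ℝ ({a, b, c} : Set Plane) ↔
    ∃ u v w : ℝ, 0 ≤ u ∧ 0 ≤ v ∧ 0 ≤ w ∧ u + v + w = 1 ∧ u • a + v • b + w • c = x := by
  constructor
  · intro h
    rw [convexHull_insert (by simp), convexHull_pair] at h
    simp only [convexJoin_singleton_left, Set.mem_iUnion] at h
    obtain ⟨y, ⟨s, t, hs, ht, hst, rfl⟩, ⟨u, v, hu, hv, huv, rfl⟩⟩ := h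
    refine ⟨u, v * s, v * t, hu, by positivity, by positivity, ?_, ?_⟩
    · rw [add_assoc, ← mul_add, hst, mul_one, huv]
    · simp only [smul_add, mul_smul, add_assoc]
  · rintro ⟨u, v, w, hu, hv, hw, h1, rfl⟩
    have hc := convex_convexHull ℝ ({a, b, c} : Set Plane)
    have ha : a ∈ convexHull ℝ ({a, b, c} : Set Plane) := subset_convexHull _ _ (by simp)
    have hb : b ∈ convexHull ℝ ({a, b, c} : Set Plane) := subset_convexHull _ _ (by simp)
    have hc' : c ∈ convexHull ℝ ({a, b, c} : Set Plane) := subset_convexHull _ _ (by simp)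
    have := hc.sum_mem (t := Finset.univ) (w := ![u, v, w]) (z := ![a, b, c])
      (by intro i _; fin_cases i <;> simp [hu, hv, hw])
      (by simp [Fin.sum_univ_three, h1])
      (by intro i _; fin_cases i <;> simp [ha, hb, hc'])
    simpa [Fin.sum_univ_three] using this

theorem mem_hull3_iff (a b c x : Plane) (h : det2 a b c ≠ 0) :
    x ∈ convexHull ℝ ({a, b, c} : Set Plane) ↔
    (0 ≤ det2 a b x ∧ 0 ≤ det2 b c x ∧ 0 ≤ det2 c a x) ∨
    (det2 a b x ≤ 0 ∧ det2 b c x ≤ 0 ∧ det2 c a x ≤ 0) := by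
  rw [mem_hull3]
  have hsum : det2 a b x + det2 b c x + det2 c a x = det2 a b c := by
    simp only [det2]; ring
  constructor
  · rintro ⟨u, v, w, hu, hv, hw, h1, rfl⟩
    obtain rfl : u = 1 - v - w := by linarith
    have e1 : det2 a b ((1 - v - w) • a + v • b + w • c) = w * det2 a b c := by
      simp [det2]; ring
    have e2 : det2 b c ((1 - v - w) • a + v • b + w • c) = (1 - v - w) * det2 a b c := by
      simp [det2]; ring
    have e3 : det2 c a ((1 - v - w) • a + v • b + w • c) = v * det2 a b c := by
      simp [det2]; ring
    rw [e1, e2, e3]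
    rcases lt_or_gt_of_ne h with h | h
    · right
      exact ⟨mul_nonpos_of_nonneg_of_nonpos hw h.le, mul_nonpos_of_nonneg_of_nonpos hu h.le,
        mul_nonpos_of_nonneg_of_nonpos hv h.le⟩
    · left
      exact ⟨mul_nonneg hw h.le, mul_nonneg hu h.le, mul_nonneg hv h.le⟩
  · intro hx
    refine ⟨det2 b c x / det2 a b c, det2 c a x / det2 a b c, det2 a b x / det2 a b c,
      ?_, ?_, ?_, ?_, ?_⟩
    · rcases hx with ⟨h1, h2, h3⟩ | ⟨h1, h2, h3⟩
      · exact div_nonneg h2 (by linarith)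
      · exact div_nonneg_of_nonpos h2 (by linarith)
    · rcases hx with ⟨h1, h2, h3⟩ | ⟨h1, h2, h3⟩
      · exact div_nonneg h3 (by linarith)
      · exact div_nonneg_of_nonpos h3 (by linarith)
    · rcases hx with ⟨h1, h2, h3⟩ | ⟨h1, h2, h3⟩
      · exact div_nonneg h1 (by linarith)
      · exact div_nonneg_of_nonpos h1 (by linarith)
    · field_simp
      linarith
    · ext
      · simp
        field_simp
        simp only [det2]; ring
      · simp
        field_simp
        simp only [det2]; ring

theorem convexPos_four (p q r s : Plane) (hpq : p ≠ q) (hpr : p ≠ r) (hps : p ≠ s)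
    (hqr : q ≠ r) (hqs : q ≠ s) (hrs : r ≠ s) :
    ConvexPos {p, q, r, s} ↔ p ∉ convexHull ℝ ({q, r, s} : Set Plane) ∧
      q ∉ convexHull ℝ ({p, r, s} : Set Plane) ∧
      r ∉ convexHull ℝ ({p, q, s} : Set Plane) ∧
      s ∉ convexHull ℝ ({p, q, r} : Set Plane) := by
  have e1 : ({p, q, r, s} : Finset Plane).erase p = {q, r, s} := by
    ext x; simp; grind
  have e2 : ({p, q, r, s} : Finset Plane).erase q = {p, r, s} := by
    ext x; simp; grind
  have e3 : ({p, q, r, s} : Finset Plane).erase r = {p, q, s} := by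
    ext x; simp; grind
  have e4 : ({p, q, r, s} : Finset Plane).erase s = {p, q, r} := by
    ext x; simp; grind
  simp only [ConvexPos, Finset.mem_insert, Finset.mem_singleton, forall_eq_or_imp, forall_eq,
    e1, e2, e3, e4, Finset.coe_insert, Finset.coe_singleton]

open Classical in
/-- Indicator of `LeftOf`. -/
noncomputable def ind (a b c : Plane) : ℤ := if LeftOf a b c then 1 else 0

open Classical in
/-- Indicator of distinctness. -/
noncomputable def dis (a b c : Plane) : ℤ := if a ≠ b ∧ a ≠ c ∧ b ≠ c then 1 else 0

open Classical in
noncomputable def EE (p q r s : Plane) : ℤ := if r ≠ s then ind p q r * ind p q s else 0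

open Classical in
noncomputable def EE' (p q r s : Plane) : ℤ := if r ≠ s then ind q p r * ind q p s else 0

noncomputable def BB (p q r s : Plane) : ℤ := ind p q r * ind q r s

open Classical in
noncomputable def CC (p q r s : Plane) : ℤ :=
  if (q ≠ r ∧ q ≠ s ∧ r ≠ s) ∧ ConvexPos {p, q, r, s} then 1 else 0

theorem ind_self1 (a b : Plane) : ind a b a = 0 := by simp [ind, LeftOf, det2]
theorem ind_self2 (a b : Plane) : ind a b b = 0 := by
  have : det2 a b b = 0 := by simp only [det2]; ring
  simp [ind, LeftOf, this]
theorem ind_self3 (a b : Plane) : ind a a b = 0 := by simp [ind, LeftOf, det2]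

set_option maxHeartbeats 4000000 in
open Classical in
theorem pointwise {S : Finset Plane} (h : GenPos S) {p q r s : Plane} (hp : p ∈ S) (hq : q ∈ S)
    (hr : r ∈ S) (hs : s ∈ S) (hpq : p ≠ q) (hpr : p ≠ r) (hps : p ≠ s) :
    CC p q r s = (EE p q r s + EE p r s q + EE p s q r) + (EE' p q r s + EE' p r s q + EE' p s q r)
      + (BB p q r s + BB p q s r + BB p r q s + BB p r s q + BB p s q r + BB p s r q)
      - 3 * dis q r s := by
  by_cases hd : q ≠ r ∧ q ≠ s ∧ r ≠ s
  · obtain ⟨hqr, hqs, hrs⟩ := hd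
    have n1 := det2_ne_s15 h hp hq hr hpq hpr hqr
    have n2 := det2_ne_s15 h hp hr hs hpr hps hrs
    have n3 := det2_ne_s15 h hp hs hq hps hpq hqs.symm
    have n4 := det2_ne_s15 h hq hr hs hqr hqs hrs
    have n5 : det2 p q s ≠ 0 := det2_ne_s15 h hp hq hs hpq hps hqs
    have hcv : CC p q r s = if ConvexPos {p, q, r, s} then 1 else 0 := by
      simp [CC, hqr, hqs, hrs]
    have hdis : dis q r s = 1 := by simp [dis, hqr, hqs, hrs]
    rw [hcv, hdis]
    simp only [convexPos_four p q r s hpq hpr hps hqr hqs hrs]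
    rw [mem_hull3_iff _ _ _ _ n4, mem_hull3_iff _ _ _ _ n2, mem_hull3_iff _ _ _ _ n5,
      mem_hull3_iff _ _ _ _ n1]
    simp only [EE, EE', BB, ind, LeftOf, if_pos hrs, if_pos hqr, if_pos hqs.symm]
    have x4 : det2 q r s = det2 p q r + det2 p r s + det2 p s q := by simp only [det2]; ring
    obtain ⟨x1, hx1⟩ : ∃ t, det2 p q r = t := ⟨_, rfl⟩
    obtain ⟨x2, hx2⟩ : ∃ t, det2 p r s = t := ⟨_, rfl⟩
    obtain ⟨x3, hx3⟩ : ∃ t, det2 p s q = t := ⟨_, rfl⟩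
    obtain ⟨y, hx4⟩ : ∃ t, det2 q r s = t := ⟨_, rfl⟩
    rw [hx1] at n1 x4
    rw [hx2] at n2 x4
    rw [hx3] at n3 x4
    rw [hx4] at n4 x4
    have a1 : det2 p r q = -x1 := by rw [← hx1]; simp only [det2]; ring
    have a2 : det2 r p q = x1 := by rw [← hx1]; simp only [det2]; ring
    have a3 : det2 q r p = x1 := by rw [← hx1]; simp only [det2]; ring
    have a4 : det2 q p r = -x1 := by rw [← hx1]; simp only [det2]; ring
    have a5 : det2 r q p = -x1 := by rw [← hx1]; simp only [det2]; ring
    have b1 : det2 p s r = -x2 := by rw [← hx2]; simp only [det2]; ring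
    have b2 : det2 s p r = x2 := by rw [← hx2]; simp only [det2]; ring
    have b3 : det2 r s p = x2 := by rw [← hx2]; simp only [det2]; ring
    have b4 : det2 r p s = -x2 := by rw [← hx2]; simp only [det2]; ring
    have b5 : det2 s r p = -x2 := by rw [← hx2]; simp only [det2]; ring
    have c1 : det2 p q s = -x3 := by rw [← hx3]; simp only [det2]; ring
    have c2 : det2 q p s = x3 := by rw [← hx3]; simp only [det2]; ring
    have c3 : det2 s q p = x3 := by rw [← hx3]; simp only [det2]; ring
    have c4 : det2 s p q = -x3 := by rw [← hx3]; simp only [det2]; ring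
    have c5 : det2 q s p = -x3 := by rw [← hx3]; simp only [det2]; ring
    have d1 : det2 q s r = -y := by rw [← hx4]; simp only [det2]; ring
    have d2 : det2 s q r = y := by rw [← hx4]; simp only [det2]; ring
    have d3 : det2 r s q = y := by rw [← hx4]; simp only [det2]; ring
    have d4 : det2 r q s = -y := by rw [← hx4]; simp only [det2]; ring
    have d5 : det2 s r q = -y := by rw [← hx4]; simp only [det2]; ring
    simp only [a1, a2, a3, a4, a5, b1, b2, b3, b4, b5, c1, c2, c3, c4, c5, d1, d2, d3, d4, d5,
      hx1, hx2, hx3, hx4, Left.neg_pos_iff, Left.nonneg_neg_iff, Left.neg_nonpos_iff]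
    clear a1 a2 a3 a4 a5 b1 b2 b3 b4 b5 c1 c2 c3 c4 c5 d1 d2 d3 d4 d5 n5
    rcases lt_or_gt_of_ne n1 with s1 | s1 <;> rcases lt_or_gt_of_ne n2 with s2 | s2 <;>
    rcases lt_or_gt_of_ne n3 with s3 | s3 <;> rcases lt_or_gt_of_ne n4 with s4 | s4 <;>
    first
    | (exfalso; linarith)
    | simp [s1, s2, s3, s4, s1.le, s2.le, s3.le, s4.le, not_lt_of_gt s1, not_lt_of_gt s2,
        not_lt_of_gt s3, not_lt_of_gt s4, not_le_of_gt s1, not_le_of_gt s2, not_le_of_gt s3,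
        not_le_of_gt s4]
  · have hcv : CC p q r s = 0 := by
      rw [CC, if_neg]; exact fun h => hd h.1
    have hdis : dis q r s = 0 := by rw [dis, if_neg hd]
    rw [hcv, hdis]
    by_cases h1 : q = r
    · subst h1; simp [EE, EE', BB, ind_self1, ind_self2, ind_self3]
    by_cases h2 : q = s
    · subst h2; simp [EE, EE', BB, ind_self1, ind_self2, ind_self3]
    by_cases h3 : r = s
    · subst h3; simp [EE, EE', BB, ind_self1, ind_self2, ind_self3]
    exact absurd ⟨h1, h2, h3⟩ hd

open Classical in
theorem triple_count (T : Finset Plane) (Q : Finset Plane → Prop) :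
    (∑ q ∈ T, ∑ r ∈ T, ∑ s ∈ T,
      (if (q ≠ r ∧ q ≠ s ∧ r ≠ s) ∧ Q {q, r, s} then (1 : ℤ) else 0)) =
    6 * (((T.powersetCard 3).filter Q).card : ℤ) := by
  have e : (∑ q ∈ T, ∑ r ∈ T, ∑ s ∈ T,
      (if (q ≠ r ∧ q ≠ s ∧ r ≠ s) ∧ Q {q, r, s} then (1 : ℤ) else 0)) =
      (((T ×ˢ T ×ˢ T).filter fun x : Plane × Plane × Plane =>
        (x.1 ≠ x.2.1 ∧ x.1 ≠ x.2.2 ∧ x.2.1 ≠ x.2.2) ∧ Q {x.1, x.2.1, x.2.2}).card : ℤ) := by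
    rw [Finset.card_filter]
    push_cast
    simp only [Finset.sum_product]
  rw [e]
  rw [Finset.card_eq_sum_card_fiberwise (f := fun x : Plane × Plane × Plane =>
    ({x.1, x.2.1, x.2.2} : Finset Plane)) (t := (T.powersetCard 3).filter Q)]
  · rw [Finset.sum_const_nat (m := 6)]
    · push_cast; ring
    · intro P hP
      rw [Finset.mem_filter, Finset.mem_powersetCard, Finset.card_eq_three] at hP
      obtain ⟨⟨hPT, a, b, c, hab, hac, hbc, rfl⟩, hQ⟩ := hP
      have : ((T ×ˢ T ×ˢ T).filter fun x : Plane × Plane × Plane =>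
          (x.1 ≠ x.2.1 ∧ x.1 ≠ x.2.2 ∧ x.2.1 ≠ x.2.2) ∧ Q {x.1, x.2.1, x.2.2}).filter
          (fun x => ({x.1, x.2.1, x.2.2} : Finset Plane) = {a, b, c}) =
          {(a, b, c), (a, c, b), (b, a, c), (b, c, a), (c, a, b), (c, b, a)} := by
        have ha : a ∈ T := hPT (by simp)
        have hb : b ∈ T := hPT (by simp)
        have hc : c ∈ T := hPT (by simp)
        ext ⟨x, y, z⟩
        simp only [Finset.mem_filter, Finset.mem_product, Finset.mem_insert,
          Finset.mem_singleton, Prod.mk.injEq]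
        constructor
        · rintro ⟨⟨_, ⟨h1, h2, h3⟩, _⟩, h⟩
          have hx : x ∈ ({a, b, c} : Finset Plane) := h ▸ (by simp)
          have hy : y ∈ ({a, b, c} : Finset Plane) := h ▸ (by simp)
          have hz : z ∈ ({a, b, c} : Finset Plane) := h ▸ (by simp)
          simp only [Finset.mem_insert, Finset.mem_singleton] at hx hy hz
          clear h hQ hPT e
          grind
        · intro h
          have hs : ({x, y, z} : Finset Plane) = {a, b, c} := by
            ext w
            simp only [Finset.mem_insert, Finset.mem_singleton]
            clear hQ hPT e
            grind
          rw [hs]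
          refine ⟨⟨?_, ?_, hQ⟩, rfl⟩
          · clear hQ hPT e hs
            grind
          · clear hQ hPT e hs
            grind
      rw [this]
      have := hab.symm
      have := hac.symm
      have := hbc.symm
      repeat rw [Finset.card_insert_of_notMem (by simp [*])]
      simp
  · intro x hx
    simp only [Finset.coe_filter, Finset.mem_product, Set.mem_ofPred_eq] at hx
    simp only [Finset.coe_filter, Finset.mem_powersetCard, Set.mem_ofPred_eq]
    refine ⟨⟨?_, ?_⟩, hx.2.2⟩
    · intro w hw
      simp only [Finset.mem_insert, Finset.mem_singleton] at hw
      rcases hw with rfl | rfl | rfl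
      exacts [hx.1.1, hx.1.2.1, hx.1.2.2]
    · exact Finset.card_eq_three.mpr ⟨_, _, _, hx.2.1.1, hx.2.1.2.1, hx.2.1.2.2, rfl⟩

theorem symm23 (T : Finset Plane) (F : Plane → Plane → Plane → ℤ) :
    ∑ q ∈ T, ∑ r ∈ T, ∑ s ∈ T, F q s r = ∑ q ∈ T, ∑ r ∈ T, ∑ s ∈ T, F q r s :=
  Finset.sum_congr rfl fun _ _ => Finset.sum_comm

theorem symm12 (T : Finset Plane) (F : Plane → Plane → Plane → ℤ) :
    ∑ q ∈ T, ∑ r ∈ T, ∑ s ∈ T, F r q s = ∑ q ∈ T, ∑ r ∈ T, ∑ s ∈ T, F q r s :=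
  Finset.sum_comm

theorem symm_rot (T : Finset Plane) (F : Plane → Plane → Plane → ℤ) :
    ∑ q ∈ T, ∑ r ∈ T, ∑ s ∈ T, F r s q = ∑ q ∈ T, ∑ r ∈ T, ∑ s ∈ T, F q r s := by
  exact (symm12 T (fun q r s => F q s r)).trans (symm23 T F)

theorem symm_rot2 (T : Finset Plane) (F : Plane → Plane → Plane → ℤ) :
    ∑ q ∈ T, ∑ r ∈ T, ∑ s ∈ T, F s q r = ∑ q ∈ T, ∑ r ∈ T, ∑ s ∈ T, F q r s := by
  rw [← symm_rot T F, ← symm_rot T (fun q r s => F r s q)]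

theorem symm13 (T : Finset Plane) (F : Plane → Plane → Plane → ℤ) :
    ∑ q ∈ T, ∑ r ∈ T, ∑ s ∈ T, F s r q = ∑ q ∈ T, ∑ r ∈ T, ∑ s ∈ T, F q r s := by
  exact (symm_rot T (fun q r s => F r q s)).trans (symm12 T F)

theorem lam_eq (T : Finset Plane) (a b : Plane) : (lam T a b : ℤ) = ∑ r ∈ T, ind a b r := by
  classical
  unfold lam
  split_ifs with h
  · subst h; simp [ind_self3]
  · rw [Finset.card_filter]; push_cast; simp only [ind]

theorem choose_sum (T : Finset Plane) (f : Plane → ℤ) (hf : ∀ x, f x * f x = f x) (k : ℕ)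
    (hk : (k : ℤ) = ∑ r ∈ T, f r) :
    2 * (k.choose 2 : ℤ) = ∑ r ∈ T, ∑ s ∈ T, if r ≠ s then f r * f s else 0 := by
  classical
  have h1 : 2 * (k.choose 2 : ℤ) = k * k - k := by
    have := Nat.choose_two_right k
    have h2 := Nat.triangle_succ
    have h3 : k.choose 2 * 2 = k * (k - 1) := by
      rw [this]; exact Nat.div_mul_cancel (Nat.even_mul_pred_self k).two_dvd
    cases k with
    | zero => simp
    | succ k => 
      have h4 : (((k+1).choose 2 * 2 : ℕ) : ℤ) = (((k+1) * k : ℕ) : ℤ) := by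
        rw [h3]; simp
      push_cast at h4 ⊢
      linarith
  have h2 : ∀ r ∈ T, (∑ s ∈ T, if r ≠ s then f r * f s else 0) = f r * (∑ s ∈ T, f s) - f r := by
    intro r hr
    have : ∀ s, (if r ≠ s then f r * f s else 0) = f r * f s - if r = s then f s else 0 := by
      intro s
      by_cases h : r = s
      · subst h; simp [hf]
      · simp [h]
    simp only [this, Finset.sum_sub_distrib, ← Finset.mul_sum]
    simp [hr]
  rw [h1, Finset.sum_congr rfl h2, Finset.sum_sub_distrib, ← Finset.sum_mul, ← hk]

theorem ind_sq (a b c : Plane) : ind a b c * ind a b c = ind a b c := by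
  unfold ind; split_ifs <;> simp

open Classical in
theorem squareCount_insert (T : Finset Plane) (p : Plane) (hp : p ∉ T) :
    squareCount (insert p T) = squareCount T +
      ((T.powersetCard 3).filter fun P => ConvexPos (insert p P)).card := by
  unfold squareCount
  rw [Finset.powersetCard_succ_insert hp, Finset.filter_union, Finset.card_union_of_disjoint]
  · congr 1
    rw [Finset.filter_image, Finset.card_image_of_injOn]
    intro A hA B hB hAB
    simp only [Finset.coe_filter, Finset.mem_powersetCard, Set.mem_ofPred_eq] at hA hB
    have hA' : p ∉ A := fun h => hp (hA.1.1 h)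
    have hB' : p ∉ B := fun h => hp (hB.1.1 h)
    rw [← Finset.erase_insert hA', hAB, Finset.erase_insert hB']
  · rw [Finset.disjoint_left]
    intro A hA hB
    simp only [Finset.mem_filter, Finset.mem_powersetCard, Finset.mem_image] at hA hB
    obtain ⟨⟨P, _, rfl⟩, _⟩ := hB
    exact hp (hA.1.1 (Finset.mem_insert_self _ _))

open Classical in
theorem stmt15 (n : ℕ) (S : Finset Plane) (hcard : S.card = n) (hgp : GenPos S)
    (p : Plane) (hp : p ∈ S) :
    (squareCount (S.erase p) : ℤ) =
      (squareCount S : ℤ) - (fS S {p} S : ℤ) - (fS S S {p} : ℤ) +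
        (∑ q ∈ S.erase p, ∑ r ∈ S.filter (fun r => LeftOf p q r),
          (1 - (lam S q r : ℤ))) +
        ((n : ℤ) - 1) * ((n : ℤ) - 2) * ((n : ℤ) - 3) / 2 := by
  obtain ⟨T, hpT, rfl⟩ : ∃ T : Finset Plane, p ∉ T ∧ S = insert p T :=
    ⟨S.erase p, by simp, (Finset.insert_erase hp).symm⟩
  rw [Finset.erase_insert hpT, squareCount_insert T p hpT]
  have hne : ∀ q ∈ T, p ≠ q := fun q hq h => hpT (h ▸ hq)
  have hn : (n : ℤ) = T.card + 1 := by
    rw [← hcard, Finset.card_insert_of_notMem hpT]; push_cast; rfl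
  have lam1 : ∀ q, (lam (insert p T) p q : ℤ) = ∑ r ∈ T, ind p q r := by
    intro q; rw [lam_eq, Finset.sum_insert hpT, ind_self1, zero_add]
  have lam2 : ∀ q, (lam (insert p T) q p : ℤ) = ∑ r ∈ T, ind q p r := by
    intro q; rw [lam_eq, Finset.sum_insert hpT, ind_self2, zero_add]
  have hf1 : 2 * (fS (insert p T) {p} (insert p T) : ℤ) =
      ∑ q ∈ T, ∑ r ∈ T, ∑ s ∈ T, EE p q r s := by
    have h0 : lam (insert p T) p p = 0 := by simp [lam]
    simp only [fS, Finset.sum_singleton, Finset.sum_insert hpT, h0]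
    push_cast
    rw [Nat.choose_zero_succ, Nat.cast_zero, zero_add, Finset.mul_sum]
    exact Finset.sum_congr rfl fun q _ => choose_sum T _ (ind_sq p q) _ (lam1 q)
  have hf2 : 2 * (fS (insert p T) (insert p T) {p} : ℤ) =
      ∑ q ∈ T, ∑ r ∈ T, ∑ s ∈ T, EE' p q r s := by
    have h0 : lam (insert p T) p p = 0 := by simp [lam]
    simp only [fS, Finset.sum_singleton, Finset.sum_insert hpT, h0]
    push_cast
    rw [Nat.choose_zero_succ, Nat.cast_zero, zero_add, Finset.mul_sum]
    exact Finset.sum_congr rfl fun q _ => choose_sum T _ (ind_sq q p) _ (lam2 q)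
  have hW : (∑ q ∈ T, ∑ r ∈ (insert p T).filter (fun r => LeftOf p q r),
      (1 - (lam (insert p T) q r : ℤ))) = - ∑ q ∈ T, ∑ r ∈ T, ∑ s ∈ T, BB p q r s := by
    rw [← Finset.sum_neg_distrib]
    refine Finset.sum_congr rfl fun q _ => ?_
    have hpp : ¬ LeftOf p q p := by simp [LeftOf, det2]
    rw [Finset.sum_filter, Finset.sum_insert hpT, if_neg hpp, zero_add,
      ← Finset.sum_neg_distrib]
    refine Finset.sum_congr rfl fun r _ => ?_
    rw [lam_eq, Finset.sum_insert hpT]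
    have hrot : det2 q r p = det2 p q r := by simp only [det2]; ring
    simp only [BB, ← Finset.mul_sum]
    by_cases hl : 0 < det2 p q r <;> simp [ind, LeftOf, hrot, hl]
  have hD : ∑ q ∈ T, ∑ r ∈ T, ∑ s ∈ T, dis q r s = 6 * (T.card.choose 3 : ℤ) := by
    have := triple_count T (fun _ => True)
    simp only [and_true, Finset.filter_true, Finset.card_powersetCard] at this
    exact this
  have hC := triple_count T (fun P => ConvexPos (insert p P))
  have hC' : ∑ q ∈ T, ∑ r ∈ T, ∑ s ∈ T, CC p q r s =
      6 * (((T.powersetCard 3).filter fun P => ConvexPos (insert p P)).card : ℤ) := hC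
  have hN : ((n : ℤ) - 1) * ((n : ℤ) - 2) * ((n : ℤ) - 3) = 6 * (T.card.choose 3 : ℤ) := by
    rw [hn]
    have h := Nat.descFactorial_eq_factorial_mul_choose T.card 3
    have h' : ((T.card.descFactorial 3 : ℕ) : ℤ) = 6 * (T.card.choose 3 : ℤ) := by
      rw [h]; simp [Nat.factorial]
    rw [← h']
    rcases T.card with _ | _ | _ | k
    · simp
    · simp
    · simp
    · simp [Nat.descFactorial]; ring
  have hP : ∑ q ∈ T, ∑ r ∈ T, ∑ s ∈ T, CC p q r s =
      ∑ q ∈ T, ∑ r ∈ T, ∑ s ∈ T, ((EE p q r s + EE p r s q + EE p s q r)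
      + (EE' p q r s + EE' p r s q + EE' p s q r)
      + (BB p q r s + BB p q s r + BB p r q s + BB p r s q + BB p s q r + BB p s r q)
      - 3 * dis q r s) :=
    Finset.sum_congr rfl fun q hq => Finset.sum_congr rfl fun r hr =>
      Finset.sum_congr rfl fun s hs => pointwise hgp hp (Finset.mem_insert_of_mem hq)
        (Finset.mem_insert_of_mem hr) (Finset.mem_insert_of_mem hs) (hne q hq) (hne r hr)
        (hne s hs)
  simp only [Finset.sum_add_distrib, Finset.sum_sub_distrib, ← Finset.mul_sum] at hP
  rw [symm_rot T (EE p), symm_rot2 T (EE p), symm_rot T (EE' p), symm_rot2 T (EE' p),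
    symm23 T (BB p), symm12 T (BB p), symm_rot T (BB p), symm_rot2 T (BB p),
    symm13 T (BB p)] at hP
  rw [hW, hN]
  push_cast
  omega
end
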